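/- arXiv:2602.07353 — 2 statements merged into one kernel-verified Lean document; each statement's English description precedes it below -/
import Mathlib

section
/- Let k be a field, let R be a commutative Artinian local k-algebra, and let f : R → S be a surjective homomorphism of commutative rings with S nontrivial (so the kernel of f is contained in the maximal ideal of R and is therefore nilpotent). Let K be an ℕ-indexed chain complex of R-modules such that every term K_i is a flat R-module. If the base-changed complex K ⊗_R S (formed degreewise) is exact, then K is exact. -/
open CategoryTheory Limits

noncomputable instance {R S : Type} [CommRing R] [CommRing S] (f : R →+* S) :
    (ModuleCat.extendScalars.{0, 0, 0} f).Additive := by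
  haveI h1 : PreservesColimitsOfSize.{0, 0} (ModuleCat.extendScalars.{0, 0, 0} f) :=
    (ModuleCat.extendRestrictScalarsAdj f).leftAdjoint_preservesColimits
  haveI h2 : Functor.IsLeftAdjoint (ModuleCat.extendScalars.{0, 0, 0} f) :=
    (ModuleCat.extendRestrictScalarsAdj f).isLeftAdjoint
  haveI h2' : PreservesColimitsOfShape (Discrete WalkingPair)
      (ModuleCat.extendScalars.{0, 0, 0} f) :=
    h1.preservesColimitsOfShape
  haveI h3 : PreservesBinaryBiproducts (ModuleCat.extendScalars.{0, 0, 0} f) :=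
    preservesBinaryBiproducts_of_preservesBinaryCoproducts _
  exact Functor.additive_of_preservesBinaryBiproducts _

/-- The degreewise base change `K ⊗_R S` of an `ℕ`-indexed chain complex of `R`-modules
along a ring homomorphism `f : R → S`. -/
noncomputable def baseChangeComplex {R S : Type} [CommRing R] [CommRing S] (f : R →+* S)
    (K : ChainComplex (ModuleCat.{0} R) ℕ) : ChainComplex (ModuleCat.{0} S) ℕ :=
  ((ModuleCat.extendScalars.{0, 0, 0} f).mapHomologicalComplex (ComplexShape.down ℕ)).obj K

/-- Nakayama for a nilpotent ideal: a module whose base change along a surjection with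
nilpotent kernel vanishes is zero. -/
theorem subsingleton_of_tensor {R S Q : Type} [CommRing R] [CommRing S] [Algebra R S]
    (hf : Function.Surjective (algebraMap R S))
    (hnil : IsNilpotent (RingHom.ker (algebraMap R S)))
    [AddCommGroup Q] [Module R Q] [Subsingleton (TensorProduct R S Q)] : Subsingleton Q := by
  let I : Ideal R := LinearMap.ker (Algebra.linearMap R S)
  have hI : I = RingHom.ker (algebraMap R S) := by
    ext x; simp [I]
  let e : (R ⧸ I) ≃ₗ[R] S :=
    LinearMap.quotKerEquivOfSurjective (Algebra.linearMap R S) hf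
  have e2 : TensorProduct R (R ⧸ I) Q ≃ₗ[R] TensorProduct R S Q :=
    TensorProduct.congr e (LinearEquiv.refl R Q)
  have h1 : Subsingleton (Q ⧸ (I • (⊤ : Submodule R Q))) :=
    ((TensorProduct.quotTensorEquivQuotSMul Q I).symm.trans e2).toEquiv.subsingleton
  have h2 : I • (⊤ : Submodule R Q) = ⊤ := Submodule.Quotient.subsingleton_iff.mp h1
  have h3 : ∀ n : ℕ, (I ^ n) • (⊤ : Submodule R Q) = ⊤ := by
    intro n
    induction n with
    | zero => simp
    | succ n ih => rw [pow_succ, Submodule.mul_smul, h2, ih]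
  obtain ⟨n, hn⟩ := hnil
  have h4 := h3 n
  rw [hI, hn] at h4
  have h5 : (⊥ : Submodule R Q) = ⊤ := by simpa using h4
  exact (Submodule.subsingleton_iff R).mp (subsingleton_of_bot_eq_top h5)

/-- One inductive step. -/
theorem exact_step {R S A B C : Type} [CommRing R] [CommRing S] [Algebra R S]
    (hf : Function.Surjective (algebraMap R S))
    (hnil : IsNilpotent (RingHom.ker (algebraMap R S)))
    [AddCommGroup A] [Module R A] [AddCommGroup B] [Module R B] [AddCommGroup C] [Module R C]
    [Module.Flat R B] (g : A →ₗ[R] B) (h : B →ₗ[R] C) (hgh : h ∘ₗ g = 0)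
    (hP : Module.Flat R (LinearMap.range h))
    (hinj : Function.Injective ((LinearMap.range h).subtype.lTensor S))
    (hex : ∀ x, h.lTensor S x = 0 → ∃ y, g.lTensor S y = x) :
    LinearMap.range g = LinearMap.ker h ∧ Module.Flat R (LinearMap.range g) ∧
      Function.Injective ((LinearMap.range g).subtype.lTensor S) := by
  have key : ∀ (M : Type) [AddCommGroup M] [Module R M],
      Function.Injective ((LinearMap.ker h).subtype.lTensor M) := fun M _ _ =>
    LinearMap.lTensor_injective_of_exact_of_flat h.rangeRestrict h.surjective_rangeRestrict
      (LinearMap.ker h).subtype (Submodule.subtype_injective _)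
      (by intro x; simp [Subtype.ext_iff]) M
  have flatZ : Module.Flat R (LinearMap.ker h) := by
    rw [Module.Flat.iff_rTensor_preserves_injective_linearMap]
    intro M' M _ _ _ _ u hu
    have h1 : Function.Injective ((u.rTensor B) ∘ₗ ((LinearMap.ker h).subtype.lTensor M')) :=
      (Module.Flat.rTensor_preserves_injective_linearMap u hu).comp (key M')
    have h2 : (u.rTensor B) ∘ₗ ((LinearMap.ker h).subtype.lTensor M') =
        ((LinearMap.ker h).subtype.lTensor M) ∘ₗ (u.rTensor (LinearMap.ker h)) := by
      rw [LinearMap.rTensor_comp_lTensor, LinearMap.lTensor_comp_rTensor]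
    rw [h2] at h1
    exact Function.Injective.of_comp h1
  have heq : LinearMap.range g = LinearMap.ker h := by
    have hle : ∀ a, g a ∈ LinearMap.ker h := fun a => LinearMap.congr_fun hgh a
    let g' : A →ₗ[R] LinearMap.ker h := g.codRestrict _ hle
    have hg' : (LinearMap.ker h).subtype ∘ₗ g' = g := rfl
    have hsurj : Function.Surjective (g'.lTensor S) := by
      intro y
      obtain ⟨x, hx⟩ := hex ((LinearMap.ker h).subtype.lTensor S y) (by
        rw [← LinearMap.comp_apply, ← LinearMap.lTensor_comp, LinearMap.comp_ker_subtype]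
        simp)
      refine ⟨x, key S ?_⟩
      rw [← hx, ← LinearMap.comp_apply, ← LinearMap.lTensor_comp, hg']
    let Q := LinearMap.ker h ⧸ LinearMap.range g'
    have hq : Function.Surjective ((LinearMap.range g').mkQ.lTensor S) :=
      LinearMap.lTensor_surjective S (Submodule.mkQ_surjective _)
    have : Subsingleton (TensorProduct R S Q) := by
      refine subsingleton_of_forall_eq 0 fun z => ?_
      obtain ⟨y, rfl⟩ := hq z
      obtain ⟨x, rfl⟩ := hsurj y
      rw [← LinearMap.comp_apply, ← LinearMap.lTensor_comp, LinearMap.range_mkQ_comp]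
      simp
    have hQ : Subsingleton Q := subsingleton_of_tensor hf hnil
    have htop : LinearMap.range g' = ⊤ := Submodule.Quotient.subsingleton_iff.mp hQ
    rw [← hg', LinearMap.range_comp, htop]
    simp
  refine ⟨heq, ?_, ?_⟩
  · rw [heq]; exact flatZ
  · rw [heq]; exact key S

/-- Let `R` be a commutative Artinian local algebra over a field `k` and `f : R → S` a
surjective ring homomorphism with `S` nontrivial.  If `K` is an `ℕ`-indexed chain complex
of flat `R`-modules such that `K ⊗_R S` is exact, then `K` is exact. -/
theorem exact_of_artinian_base_change_exact
    (k : Type) [Field k] (R : Type) [CommRing R] [Algebra k R]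
    [IsArtinianRing R] [IsLocalRing R]
    (S : Type) [CommRing S] [Nontrivial S] (f : R →+* S) (hf : Function.Surjective f)
    (K : ChainComplex (ModuleCat.{0} R) ℕ) (hflat : ∀ i : ℕ, Module.Flat R (K.X i))
    (hexact : ∀ d : ℕ, IsZero ((baseChangeComplex f K).homology d)) :
    ∀ d : ℕ, IsZero (K.homology d) := by
  letI : Algebra R S := f.toAlgebra
  have hf' : Function.Surjective (algebraMap R S) := hf
  have hnil : IsNilpotent (RingHom.ker (algebraMap R S)) := by
    obtain ⟨n, hn⟩ := IsArtinianRing.isNilpotent_jacobson_bot (R := R)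
    refine ⟨n, ?_⟩
    rw [Ideal.zero_eq_bot] at hn ⊢
    rw [eq_bot_iff, ← hn]
    refine Ideal.pow_right_mono ?_ n
    rw [IsLocalRing.jacobson_eq_maximalIdeal _ bot_ne_top]
    exact IsLocalRing.le_maximalIdeal (RingHom.ker_ne_top _)
  have hex : ∀ i j l : ℕ, (ComplexShape.down ℕ).prev j = i → (ComplexShape.down ℕ).next j = l →
      ∀ x, (K.d j l).hom.lTensor S x = 0 → ∃ y, (K.d i j).hom.lTensor S y = x := by
    intro i j l hi hl x hx
    have h := hexact j
    rw [← HomologicalComplex.exactAt_iff_isZero_homology,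
      HomologicalComplex.exactAt_iff' _ i j l hi hl, ShortComplex.moduleCat_exact_iff] at h
    exact h x hx
  have main : ∀ j i : ℕ, (ComplexShape.down ℕ).prev j = i →
      LinearMap.range (K.d i j).hom
        = LinearMap.ker (K.d j ((ComplexShape.down ℕ).next j)).hom ∧
      Module.Flat R (LinearMap.range (K.d i j).hom) ∧
      Function.Injective ((LinearMap.range (K.d i j).hom).subtype.lTensor S) := by
    intro j
    induction j with
    | zero =>
      intro i hi
      have h0 : (K.d 0 ((ComplexShape.down ℕ).next 0)).hom = 0 := by
        rw [K.shape]
        · rfl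
        · simp
      have hb : LinearMap.range (K.d 0 ((ComplexShape.down ℕ).next 0)).hom = ⊥ := by
        rw [h0, LinearMap.range_zero]
      have := hflat 0
      refine exact_step hf' hnil _ _ ?_ ?_ ?_ (hex i 0 _ hi rfl)
      · rw [h0, LinearMap.zero_comp]
      · rw [hb]; infer_instance
      · rw [hb]
        exact Function.injective_of_subsingleton _
    | succ j ih =>
      intro i hi
      have hn : (ComplexShape.down ℕ).next (j + 1) = j := by simp
      obtain ⟨-, h2, h3⟩ := ih (j + 1) (by simp)
      have := hflat (j + 1)
      rw [hn]
      refine exact_step hf' hnil _ _ ?_ h2 h3 (hex i (j + 1) j hi hn)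
      rw [← ModuleCat.hom_comp, K.d_comp_d]
      rfl
  intro d
  rw [← HomologicalComplex.exactAt_iff_isZero_homology,
    HomologicalComplex.exactAt_iff' _ _ d _ rfl rfl,
    ShortComplex.moduleCat_exact_iff_range_eq_ker]
  exact (main d _ rfl).1
end

section
/- Let k be a field, let R be a commutative Artinian local k-algebra, and let f : R → S be a surjective homomorphism of commutative rings with S nontrivial. Let φ : K → L be a morphism of ℕ-indexed chain complexes of R-modules such that every term of K and of L is a flat R-module. If the base-changed map φ ⊗_R S : K ⊗_R S → L ⊗_R S (formed degreewise) is a quasi-isomorphism, then φ is a quasi-isomorphism. -/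
open CategoryTheory Limits

/-- The degreewise base change functor `- ⊗_R S` on `ℕ`-indexed chain complexes of
`R`-modules along a ring homomorphism `f : R → S`. -/
noncomputable def baseChangeComplexFunctor {R S : Type} [CommRing R] [CommRing S]
    (f : R →+* S) :
    ChainComplex (ModuleCat.{0} R) ℕ ⥤ ChainComplex (ModuleCat.{0} S) ℕ :=
  (ModuleCat.extendScalars.{0, 0, 0} f).mapHomologicalComplex (ComplexShape.down ℕ)

open TensorProduct

/-- The kernel of `m ↦ 1 ⊗ m` for a surjective algebra. -/
lemma ABC.mem_of_one_tmul {R S M : Type} [CommRing R] [CommRing S] [Algebra R S]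
    (hf : Function.Surjective (algebraMap R S)) [AddCommGroup M] [Module R M] (m : M)
    (h : (1 : S) ⊗ₜ[R] m = 0) : m ∈ RingHom.ker (algebraMap R S) • (⊤ : Submodule R M) := by
  have hex : Function.Exact (RingHom.ker (algebraMap R S)).subtype (Algebra.linearMap R S) := by
    intro x
    simp [RingHom.mem_ker]
  have h2 := rTensor_exact M hex hf
  have h3 : (Algebra.linearMap R S).rTensor M ((1 : R) ⊗ₜ[R] m) = 0 := by
    simpa using h
  obtain ⟨t, ht⟩ := (h2 _).1 h3
  rw [← Ideal.subtype_rTensor_range]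
  refine ⟨t, ?_⟩
  change (TensorProduct.lid R M) ((RingHom.ker (algebraMap R S)).subtype.rTensor M t) = m
  rw [ht]
  simp

lemma ABC.one_tmul_of_mem {R S M : Type} [CommRing R] [CommRing S] [Algebra R S]
    [AddCommGroup M] [Module R M] (m : M)
    (h : m ∈ RingHom.ker (algebraMap R S) • (⊤ : Submodule R M)) :
    (1 : S) ⊗ₜ[R] m = 0 := by
  refine Submodule.smul_induction_on h ?_ ?_
  · intro r hr n _
    rw [TensorProduct.tmul_smul, TensorProduct.smul_tmul', Algebra.smul_def,
      (RingHom.mem_ker).1 hr]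
    simp
  · intro x y hx hy
    rw [TensorProduct.tmul_add, hx, hy, add_zero]

lemma ABC.flat_ker {R B Z : Type} [CommRing R] [AddCommGroup B] [Module R B]
    [AddCommGroup Z] [Module R Z] [Module.Flat R B] [Module.Flat R Z]
    (g : B →ₗ[R] Z) (hg : Function.Surjective g) : Module.Flat R (LinearMap.ker g) := by
  rw [Module.Flat.iff_rTensor_preserves_injective_linearMap]
  intro N N' _ _ _ _ u hu
  have h1 := LinearMap.lTensor_injective_of_exact_of_flat g hg (LinearMap.ker g).subtype
    (Submodule.injective_subtype _) (LinearMap.exact_subtype_ker_map g) N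
  have h2 := Module.Flat.rTensor_preserves_injective_linearMap (M := B) u hu
  have h3 : Function.Injective (u.rTensor B ∘ₗ (LinearMap.ker g).subtype.lTensor N) :=
    h2.comp h1
  rw [LinearMap.rTensor_comp_lTensor, ← LinearMap.lTensor_comp_rTensor] at h3
  exact Function.Injective.of_comp h3

lemma ABC.step {R S A B Z : Type} [CommRing R] [CommRing S] [Algebra R S]
    (hs : Function.Surjective (algebraMap R S))
    (hnil : IsNilpotent (RingHom.ker (algebraMap R S)))
    [AddCommGroup A] [Module R A] [AddCommGroup B] [Module R B]
    [AddCommGroup Z] [Module R Z] [Module.Flat R B] [Module.Flat R Z]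
    (f : A →ₗ[R] B) (g : B →ₗ[R] Z) (hg : Function.Surjective g) (hgf : ∀ a, g (f a) = 0)
    (h : ∀ b, g b = 0 → ∃ a, b - f a ∈ RingHom.ker (algebraMap R S) • (⊤ : Submodule R B)) :
    (∀ b, g b = 0 → ∃ a, f a = b) ∧ Module.Flat R (LinearMap.ker g) := by
  refine ⟨?_, ABC.flat_ker g hg⟩
  set I := RingHom.ker (algebraMap R S) with hI
  let f' : A →ₗ[R] LinearMap.ker g := f.codRestrict _ hgf
  have h1 := LinearMap.lTensor_injective_of_exact_of_flat g hg (LinearMap.ker g).subtype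
    (Submodule.injective_subtype _) (LinearMap.exact_subtype_ker_map g) S
  have pure : ∀ z : LinearMap.ker g, (z : B) ∈ I • (⊤ : Submodule R B) →
      z ∈ I • (⊤ : Submodule R (LinearMap.ker g)) := by
    intro z hz
    apply ABC.mem_of_one_tmul hs
    apply h1
    rw [map_zero]
    exact ABC.one_tmul_of_mem _ hz
  have key : (⊤ : Submodule R (LinearMap.ker g)) ≤ LinearMap.range f' ⊔ I • ⊤ := by
    intro z _
    obtain ⟨a, ha⟩ := h z.1 z.2
    have := pure (z - f' a) ha
    rw [← add_sub_cancel (f' a) z]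
    exact Submodule.add_mem_sup ⟨a, rfl⟩ this
  have key2 : ∀ n : ℕ, (⊤ : Submodule R (LinearMap.ker g)) ≤ LinearMap.range f' ⊔ I ^ n • ⊤ := by
    intro n
    induction n with
    | zero => simp
    | succ n ih =>
      refine key.trans (sup_le le_sup_left ?_)
      refine (Submodule.smul_mono le_rfl ih : I • (⊤ : Submodule R (LinearMap.ker g)) ≤ _).trans ?_
      rw [Submodule.smul_sup, ← mul_smul, ← pow_succ']
      exact sup_le_sup Submodule.smul_le_right le_rfl
  obtain ⟨n, hn⟩ := hnil
  have := key2 n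
  rw [hn] at this
  intro b hb
  have h3 := this (Submodule.mem_top (x := (⟨b, hb⟩ : LinearMap.ker g)))
  simp only [Submodule.zero_eq_bot, Submodule.bot_smul, sup_bot_eq] at h3
  obtain ⟨a, ha⟩ := h3
  exact ⟨a, congrArg Subtype.val ha⟩

lemma ABC.acyclic {R S : Type} [CommRing R] [CommRing S] [Algebra R S]
    (hs : Function.Surjective (algebraMap R S))
    (hnil : IsNilpotent (RingHom.ker (algebraMap R S)))
    (C : ℕ → ModuleCat.{0} R) (hC : ∀ n, Module.Flat R (C n))
    (d : ∀ n, C (n + 1) →ₗ[R] C n) (hd : ∀ n x, d n (d (n + 1) x) = 0)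
    (h0 : ∀ y : C 0, ∃ x, y - d 0 x ∈ RingHom.ker (algebraMap R S) • (⊤ : Submodule R (C 0)))
    (h1 : ∀ n (x : C (n + 1)), d n x ∈ RingHom.ker (algebraMap R S) • (⊤ : Submodule R (C n)) →
      ∃ z, x - d (n + 1) z ∈ RingHom.ker (algebraMap R S) • (⊤ : Submodule R (C (n + 1)))) :
    (∀ y, ∃ x, d 0 x = y) ∧ ∀ n x, d n x = 0 → ∃ z, d (n + 1) z = x := by
  have s0 : ∀ y, ∃ x, d 0 x = y := by
    have := (ABC.step hs hnil (d 0) (0 : C 0 →ₗ[R] PUnit.{1}) (fun _ => ⟨0, rfl⟩)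
      (fun _ => rfl) (fun b _ => h0 b)).1
    exact fun y => this y rfl
  refine ⟨s0, ?_⟩
  have main : ∀ n, (∀ x, d n x = 0 → ∃ z, d (n + 1) z = x) ∧
      Module.Flat R (LinearMap.ker (d n)) := by
    intro n
    induction n with
    | zero =>
      exact ABC.step hs hnil (d 1) (d 0) s0 (hd 0)
        (fun b hb => h1 0 b (by rw [hb]; exact Submodule.zero_mem _))
    | succ n ih =>
      obtain ⟨ih1, ih2⟩ := ih
      let g : C (n + 2) →ₗ[R] LinearMap.ker (d n) := (d (n + 1)).codRestrict _ (hd n)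
      have hg : Function.Surjective g := by
        rintro ⟨x, hx⟩
        obtain ⟨z, hz⟩ := ih1 x hx
        exact ⟨z, Subtype.ext hz⟩
      have hk : LinearMap.ker g = LinearMap.ker (d (n + 1)) := LinearMap.ker_codRestrict _ _ _
      have hz : ∀ b, g b = 0 ↔ d (n + 1) b = 0 := by
        intro b
        rw [← LinearMap.mem_ker, hk, LinearMap.mem_ker]
      have := ABC.step hs hnil (d (n + 2)) g hg (fun a => (hz _).2 (hd _ _))
        (fun b hb => h1 (n + 1) b (by rw [(hz b).1 hb]; exact Submodule.zero_mem _))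
      rw [hk] at this
      exact ⟨fun x hx => this.1 x ((hz x).2 hx), this.2⟩
  exact fun n => (main n).1

/-- Elementwise exactness of the mapping cone. -/
def ABC.ConeExact {R : Type} [CommRing R] {K L : ChainComplex (ModuleCat.{0} R) ℕ}
    (φ : K ⟶ L) : Prop :=
  (∀ y : L.X 0, ∃ (x : K.X 0) (w : L.X 1), y = φ.f 0 x + L.d 1 0 w) ∧
  ∀ (n k : ℕ), (ComplexShape.down ℕ).next n = k → ∀ (x : K.X n) (y : L.X (n + 1)),
    K.d n k x = 0 → φ.f n x + L.d (n + 1) n y = 0 →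
    ∃ (x' : K.X (n + 1)) (y' : L.X (n + 2)), x = - K.d (n + 1) n x' ∧
      y = φ.f (n + 1) x' + L.d (n + 2) (n + 1) y'

/-- The map from the ring picking out an element. -/
noncomputable abbrev ABC.el {R : Type} [CommRing R] {M : ModuleCat.{0} R} (x : M) :
    ModuleCat.of R R ⟶ M := ModuleCat.ofHom (LinearMap.toSpanSingleton R M x)

lemma ABC.mono_el {R : Type} [CommRing R] {K L : ChainComplex (ModuleCat.{0} R) ℕ}
    (φ : K ⟶ L) (n k : ℕ) (hk : (ComplexShape.down ℕ).next n = k)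
    (h : Mono (HomologicalComplex.homologyMap φ n)) (x : K.X n) (hx : K.d n k x = 0)
    (y : L.X (n + 1)) (hxy : φ.f n x = L.d (n + 1) n y) :
    ∃ z : K.X (n + 1), x = K.d (n + 1) n z := by
  rw [HomologicalComplex.mono_homologyMap_iff_up_to_refinements φ (n + 1) n k (by simp) hk] at h
  obtain ⟨A', π, hπ, x₁, h1⟩ := h (ABC.el x) (by ext; simp [hx]) (ABC.el y) (by ext; simp [hxy])
  obtain ⟨a, ha⟩ := (ModuleCat.epi_iff_surjective π).1 hπ (1 : R)
  refine ⟨x₁ a, ?_⟩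
  have := ConcreteCategory.congr_hom h1 a
  simpa [ha] using this

lemma ABC.epi_el {R : Type} [CommRing R] {K L : ChainComplex (ModuleCat.{0} R) ℕ}
    (φ : K ⟶ L) (n k : ℕ) (hk : (ComplexShape.down ℕ).next n = k)
    (h : Epi (HomologicalComplex.homologyMap φ n)) (y : L.X n) (hy : L.d n k y = 0) :
    ∃ (x : K.X n) (w : L.X (n + 1)), K.d n k x = 0 ∧ y = φ.f n x + L.d (n + 1) n w := by
  rw [HomologicalComplex.epi_homologyMap_iff_up_to_refinements φ (n + 1) n k (by simp) hk] at h
  obtain ⟨A', π, hπ, x₂, h2, y₁, h1⟩ := h (ABC.el y) (by ext; simp [hy])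
  obtain ⟨a, ha⟩ := (ModuleCat.epi_iff_surjective π).1 hπ (1 : R)
  refine ⟨x₂ a, y₁ a, ?_, ?_⟩
  · simpa using ConcreteCategory.congr_hom h2 a
  · have := ConcreteCategory.congr_hom h1 a
    simpa [ha] using this

lemma ABC.coneExact_of_quasiIso {R : Type} [CommRing R] {K L : ChainComplex (ModuleCat.{0} R) ℕ}
    (φ : K ⟶ L) (h : QuasiIso φ) : ABC.ConeExact φ := by
  have hi : ∀ n, IsIso (HomologicalComplex.homologyMap φ n) := fun n => inferInstance
  have comm : ∀ i j (x : K.X i), L.d i j (φ.f i x) = φ.f j (K.d i j x) := fun i j x => by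
    exact ConcreteCategory.congr_hom (φ.comm i j) x
  constructor
  · intro y
    obtain ⟨x, w, _, h⟩ := ABC.epi_el φ 0 0 (by simp) inferInstance y (by simp)
    exact ⟨x, w, h⟩
  · intro n k hk x y hx hxy
    obtain ⟨z, hz⟩ := ABC.mono_el φ n k hk inferInstance x hx (-y)
      (by rw [map_neg]; exact eq_neg_of_add_eq_zero_left hxy)
    obtain ⟨u, w, hu, hw⟩ := ABC.epi_el φ (n + 1) n (by simp) inferInstance
      (y + φ.f (n + 1) z) (by rw [map_add, comm, ← hz, add_comm]; exact hxy)
    refine ⟨u - z, w, ?_, ?_⟩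
    · rw [map_sub, hu, hz]; simp
    · rw [map_sub, eq_sub_of_add_eq hw]; abel

lemma ABC.quasiIso_of_coneExact {R : Type} [CommRing R] {K L : ChainComplex (ModuleCat.{0} R) ℕ}
    (φ : K ⟶ L) (h : ABC.ConeExact φ) : QuasiIso φ := by
  obtain ⟨h0, h1⟩ := h
  refine ⟨fun n => ?_⟩
  rw [quasiIsoAt_iff_isIso_homologyMap]
  have hcov : ∀ A : ModuleCat.{0} R,
      Epi (ModuleCat.freeDesc (R := R) (M := A) (X := (A : Type)) (↾(fun a => a))) := by
    intro A
    rw [ModuleCat.epi_iff_surjective]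
    intro a
    exact ⟨ModuleCat.freeMk a, by simp⟩
  have hm : Mono (HomologicalComplex.homologyMap φ n) := by
    rw [HomologicalComplex.mono_homologyMap_iff_up_to_refinements φ (n + 1) n _ (by simp) rfl]
    intro A x hx y hxy
    have : ∀ a : A, ∃ z : K.X (n + 1), x a = K.d (n + 1) n z := by
      intro a
      obtain ⟨x', -, h, -⟩ := h1 n _ rfl (x a) (-(y a))
        (by simpa using ConcreteCategory.congr_hom hx a)
        (by
          have := ConcreteCategory.congr_hom hxy a
          simp at this
          simp [this])
      exact ⟨-x', by rw [h, map_neg]⟩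
    choose z hz using this
    refine ⟨_, _, hcov A, ModuleCat.freeDesc (↾z), ?_⟩
    ext a
    simp [hz]
  have he : Epi (HomologicalComplex.homologyMap φ n) := by
    rw [HomologicalComplex.epi_homologyMap_iff_up_to_refinements φ (n + 1) n _ (by simp) rfl]
    intro A y hy
    have : ∀ a : A, ∃ (x : K.X n) (w : L.X (n + 1)), K.d n ((ComplexShape.down ℕ).next n) x = 0 ∧
        y a = φ.f n x + L.d (n + 1) n w := by
      intro a
      cases n with
      | zero =>
        obtain ⟨x, w, h⟩ := h0 (y a)
        exact ⟨x, w, by simp, h⟩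
      | succ n =>
        have hk : (ComplexShape.down ℕ).next (n + 1) = n := by simp
        rw [hk] at hy ⊢
        have := ConcreteCategory.congr_hom hy a
        obtain ⟨x', y', h2, h3⟩ := h1 n _ rfl 0 (y a) (by simp) (by simpa using this)
        exact ⟨x', y', neg_eq_zero.1 h2.symm, h3⟩
    choose x w hx hy using this
    refine ⟨_, _, hcov A, ModuleCat.freeDesc (↾x), ?_, ModuleCat.freeDesc (↾w), ?_⟩
    · ext a
      simp [hx]
    · ext a
      simp [hy]
  exact isIso_of_mono_of_epi _

/-- The terms of the mapping cone. -/
def ABC.coneX {R : Type} [CommRing R] (K L : ChainComplex (ModuleCat.{0} R) ℕ) :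
    ℕ → ModuleCat.{0} R
  | 0 => L.X 0
  | n + 1 => ModuleCat.of R (K.X n × L.X (n + 1))

/-- The differential of the mapping cone. -/
def ABC.coneD {R : Type} [CommRing R] {K L : ChainComplex (ModuleCat.{0} R) ℕ} (φ : K ⟶ L) :
    ∀ n, ABC.coneX K L (n + 1) →ₗ[R] ABC.coneX K L n
  | 0 => (φ.f 0).hom.coprod (L.d 1 0).hom
  | n + 1 => (-((K.d (n + 1) n).hom ∘ₗ LinearMap.fst R _ _)).prod
      ((φ.f (n + 1)).hom.coprod (L.d (n + 2) (n + 1)).hom)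

lemma ABC.mem_smul_prod {R M N : Type} [CommRing R] [AddCommGroup M] [Module R M]
    [AddCommGroup N] [Module R N] (I : Ideal R) (x : M × N) :
    x ∈ I • (⊤ : Submodule R (M × N)) ↔
      x.1 ∈ I • (⊤ : Submodule R M) ∧ x.2 ∈ I • (⊤ : Submodule R N) := by
  constructor
  · intro h
    have h1 := Submodule.mem_map_of_mem (f := LinearMap.fst R M N) h
    have h2 := Submodule.mem_map_of_mem (f := LinearMap.snd R M N) h
    rw [Submodule.map_smul''] at h1 h2
    exact ⟨Submodule.smul_mono le_rfl le_top h1, Submodule.smul_mono le_rfl le_top h2⟩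
  · rintro ⟨h1, h2⟩
    have h1' := Submodule.mem_map_of_mem (f := LinearMap.inl R M N) h1
    have h2' := Submodule.mem_map_of_mem (f := LinearMap.inr R M N) h2
    rw [Submodule.map_smul''] at h1' h2'
    have := Submodule.add_mem _
      ((Submodule.smul_mono le_rfl le_top : _ ≤ I • (⊤ : Submodule R (M × N))) h1')
      ((Submodule.smul_mono le_rfl le_top : _ ≤ I • (⊤ : Submodule R (M × N))) h2')
    simpa using this

/-- The map `m ↦ 1 ⊗ m`. -/
noncomputable def ABC.ι {R S : Type} [CommRing R] [CommRing S] (f : R →+* S)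
    (M : ModuleCat.{0} R) : M →+ (ModuleCat.extendScalars.{0, 0, 0} f).obj M :=
  letI := f.toAlgebra
  (TensorProduct.mk R S M 1).toAddMonoidHom

lemma ABC.ι_map {R S : Type} [CommRing R] [CommRing S] (f : R →+* S)
    {M N : ModuleCat.{0} R} (g : M ⟶ N) (m : M) :
    (ModuleCat.extendScalars.{0, 0, 0} f).map g (ABC.ι f M m) = ABC.ι f N (g m) := rfl

lemma ABC.ι_eq_zero {R S : Type} [CommRing R] [CommRing S] (f : R →+* S)
    (hf : Function.Surjective f) (M : ModuleCat.{0} R) (m : M) :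
    ABC.ι f M m = 0 ↔ m ∈ RingHom.ker f • (⊤ : Submodule R M) := by
  letI := f.toAlgebra
  exact ⟨ABC.mem_of_one_tmul (S := S) hf m, ABC.one_tmul_of_mem (S := S) m⟩

lemma ABC.ι_surj {R S : Type} [CommRing R] [CommRing S] (f : R →+* S)
    (hf : Function.Surjective f) (M : ModuleCat.{0} R) : Function.Surjective (ABC.ι f M) := by
  letI := f.toAlgebra
  exact TensorProduct.mk_surjective R M S hf

lemma ABC.ker_nilpotent {R S : Type} [CommRing R] [IsArtinianRing R] [IsLocalRing R]
    [CommRing S] [Nontrivial S] (f : R →+* S) : IsNilpotent (RingHom.ker f) := by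
  obtain ⟨n, hn⟩ := IsArtinianRing.isNilpotent_jacobson_bot (R := R)
  refine ⟨n, le_bot_iff.1 ?_⟩
  rw [Submodule.zero_eq_bot] at hn
  rw [← hn, IsLocalRing.jacobson_eq_maximalIdeal ⊥ bot_ne_top]
  exact Ideal.pow_right_mono (IsLocalRing.le_maximalIdeal (RingHom.ker_ne_top f)) n

lemma ABC.flat_prod {R M N : Type} [CommRing R] [AddCommGroup M] [Module R M]
    [AddCommGroup N] [Module R N] [Module.Flat R M] [Module.Flat R N] :
    Module.Flat R (M × N) := by
  rw [Module.Flat.iff_rTensor_preserves_injective_linearMap]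
  intro A B _ _ _ _ u hu
  have h1 := Module.Flat.rTensor_preserves_injective_linearMap (M := M) u hu
  have h2 := Module.Flat.rTensor_preserves_injective_linearMap (M := N) u hu
  have h3 : (TensorProduct.prodRight R R B M N).toLinearMap ∘ₗ u.rTensor (M × N) =
      ((u.rTensor M).prodMap (u.rTensor N)) ∘ₗ
        (TensorProduct.prodRight R R A M N).toLinearMap := by
    apply TensorProduct.ext'
    rintro a ⟨m, n⟩
    simp
  have h4 : Function.Injective (((u.rTensor M).prodMap (u.rTensor N)) ∘ₗ
      (TensorProduct.prodRight R R A M N).toLinearMap) :=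
    (Function.Injective.prodMap h1 h2).comp (TensorProduct.prodRight R R A M N).injective
  rw [← h3] at h4
  exact Function.Injective.of_comp h4

/-- Let `R` be a commutative Artinian local algebra over a field `k` and `f : R → S` a
surjective ring homomorphism with `S` nontrivial.  If `φ : K ⟶ L` is a morphism of
`ℕ`-indexed chain complexes of flat `R`-modules whose base change `φ ⊗_R S` is a
quasi-isomorphism, then `φ` is a quasi-isomorphism. -/
theorem quasiIso_of_artinian_base_change_quasiIso
    (k : Type) [Field k] (R : Type) [CommRing R] [Algebra k R]
    [IsArtinianRing R] [IsLocalRing R]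
    (S : Type) [CommRing S] [Nontrivial S] (f : R →+* S) (hf : Function.Surjective f)
    {K L : ChainComplex (ModuleCat.{0} R) ℕ} (φ : K ⟶ L)
    (hKflat : ∀ i : ℕ, Module.Flat R (K.X i)) (hLflat : ∀ i : ℕ, Module.Flat R (L.X i))
    (hqis : QuasiIso ((baseChangeComplexFunctor f).map φ)) :
    QuasiIso φ := by
  letI := f.toAlgebra
  obtain ⟨q0, q1⟩ := ABC.coneExact_of_quasiIso _ hqis
  have comm : ∀ i j (x : K.X i), L.d i j (φ.f i x) = φ.f j (K.d i j x) := fun i j x => by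
    exact ConcreteCategory.congr_hom (φ.comm i j) x
  have hKd : ∀ i j k (x : K.X i), K.d j k (K.d i j x) = 0 := fun i j k x =>
    ConcreteCategory.congr_hom (K.d_comp_d i j k) x
  have hLd : ∀ i j k (x : L.X i), L.d j k (L.d i j x) = 0 := fun i j k x =>
    ConcreteCategory.congr_hom (L.d_comp_d i j k) x
  have Q0 : ∀ y : L.X 0, ∃ (x : K.X 0) (w : L.X 1),
      y - (φ.f 0 x + L.d 1 0 w) ∈ RingHom.ker f • (⊤ : Submodule R (L.X 0)) := by
    intro y
    obtain ⟨x, w, h⟩ := q0 (ABC.ι f _ y)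
    obtain ⟨x, rfl⟩ := ABC.ι_surj f hf _ x
    obtain ⟨w, rfl⟩ := ABC.ι_surj f hf _ w
    refine ⟨x, w, ?_⟩
    rw [← ABC.ι_eq_zero f hf, map_sub, map_add, sub_eq_zero]
    exact h
  have Q1 : ∀ (n k : ℕ), (ComplexShape.down ℕ).next n = k → ∀ (x : K.X n) (y : L.X (n + 1)),
      K.d n k x ∈ RingHom.ker f • (⊤ : Submodule R (K.X k)) →
      φ.f n x + L.d (n + 1) n y ∈ RingHom.ker f • (⊤ : Submodule R (L.X n)) →
      ∃ (x' : K.X (n + 1)) (y' : L.X (n + 2)),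
        x - - K.d (n + 1) n x' ∈ RingHom.ker f • (⊤ : Submodule R (K.X n)) ∧
        y - (φ.f (n + 1) x' + L.d (n + 2) (n + 1) y') ∈
          RingHom.ker f • (⊤ : Submodule R (L.X (n + 1))) := by
    intro n k hk x y hx hxy
    rw [← ABC.ι_eq_zero f hf] at hx hxy
    rw [map_add] at hxy
    obtain ⟨x', y', h1, h2⟩ := q1 n k hk (ABC.ι f _ x) (ABC.ι f _ y) hx hxy
    obtain ⟨x', rfl⟩ := ABC.ι_surj f hf _ x'
    obtain ⟨y', rfl⟩ := ABC.ι_surj f hf _ y'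
    refine ⟨x', y', ?_, ?_⟩
    · rw [← ABC.ι_eq_zero f hf, map_sub, map_neg, sub_eq_zero]
      exact h1
    · rw [← ABC.ι_eq_zero f hf, map_sub, map_add, sub_eq_zero]
      exact h2
  have main := ABC.acyclic (R := R) (S := S) hf (ABC.ker_nilpotent f) (ABC.coneX K L)
    (by
      intro n
      cases n with
      | zero => exact hLflat 0
      | succ n =>
        haveI := hKflat n
        haveI := hLflat (n + 1)
        exact ABC.flat_prod (R := R) (M := K.X n) (N := L.X (n + 1)))
    (ABC.coneD φ)
    (by
      intro n x
      cases n with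
      | zero =>
        obtain ⟨x, y⟩ := x
        change φ.f 0 (- K.d 1 0 x) + L.d 1 0 (φ.f 1 x + L.d 2 1 y) = 0
        rw [map_neg, map_add, comm, hLd]
        abel
      | succ n =>
        obtain ⟨x, y⟩ := x
        refine Prod.ext ?_ ?_
        · change - K.d (n + 1) n (- K.d (n + 2) (n + 1) x) = 0
          rw [map_neg, hKd]; simp
        · change φ.f (n + 1) (- K.d (n + 2) (n + 1) x) +
            L.d (n + 2) (n + 1) (φ.f (n + 2) x + L.d (n + 3) (n + 2) y) = 0
          rw [map_neg, map_add, comm, hLd]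
          abel)
    (by
      intro y
      obtain ⟨x, w, h⟩ := Q0 y
      exact ⟨(x, w), h⟩)
    (by
      intro n x hx
      obtain ⟨x, y⟩ := x
      have : K.d n ((ComplexShape.down ℕ).next n) x ∈ RingHom.ker f •
            (⊤ : Submodule R (K.X ((ComplexShape.down ℕ).next n))) ∧
          φ.f n x + L.d (n + 1) n y ∈ RingHom.ker f • (⊤ : Submodule R (L.X n)) := by
        cases n with
        | zero =>
          refine ⟨?_, hx⟩
          have : K.d 0 ((ComplexShape.down ℕ).next 0) = 0 := K.shape _ _ (by simp)
          rw [this]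
          exact Submodule.zero_mem _
        | succ n =>
          have h := (ABC.mem_smul_prod (RingHom.ker f) _).1 hx
          refine ⟨?_, h.2⟩
          have hk : (ComplexShape.down ℕ).next (n + 1) = n := by simp
          rw [hk]
          have h1 := Submodule.neg_mem _ h.1
          have h2 : - - K.d (n + 1) n x ∈ RingHom.ker f • (⊤ : Submodule R (K.X n)) := h1
          rwa [neg_neg] at h2
      obtain ⟨x', y', h1, h2⟩ := Q1 n _ rfl x y this.1 this.2
      exact ⟨(x', y'), (ABC.mem_smul_prod (RingHom.ker f) _).2 ⟨h1, h2⟩⟩)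
  obtain ⟨m0, m1⟩ := main
  apply ABC.quasiIso_of_coneExact
  constructor
  · intro y
    obtain ⟨⟨x, w⟩, h⟩ := m0 y
    exact ⟨x, w, h.symm⟩
  · intro n k hk x y hx hxy
    have : ABC.coneD φ n (x, y) = 0 := by
      cases n with
      | zero => exact hxy
      | succ n =>
        have hk' : (ComplexShape.down ℕ).next (n + 1) = n := by simp
        obtain rfl : n = k := hk'.symm.trans hk
        refine Prod.ext ?_ hxy
        change - K.d (n + 1) n x = 0
        rw [hx, neg_zero]
    obtain ⟨⟨x', y'⟩, h⟩ := m1 n _ this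
    exact ⟨x', y', (congrArg Prod.fst h).symm, (congrArg Prod.snd h).symm⟩
end
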